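/- For a real number a \ne 0, define the normalized Charlier polynomials c_n^a(x) = \frac{1}{n!} \sum_{j=0}^n (-a)^{n-j} \binom{n}{j} \binom{x}{j} j!. Then for all natural numbers n, m and every real x: \det\big( c^a_{m+j-1}(x+i-1) \big)_{i,j=1}^n = (-1)^{nm} \det\big( c^{-a}_{n+j-1}(-x+i-1) \big)_{i,j=1}^m, where the determinant of a 0\times 0 matrix equals 1. -/

import Mathlib

/-- The generalized binomial coefficient `x choose j = x(x-1)⋯(x-j+1)/j!`. -/
noncomputable def gbinom (x : ℝ) (j : ℕ) : ℝ :=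
  (∏ k ∈ Finset.range j, (x - k)) / j.factorial

/-- The normalized Charlier polynomial
`c_n^a(x) = (1/n!) ∑_{j=0}^n (-a)^{n-j} C(n,j) C(x,j) j!`. -/
noncomputable def charlier (a : ℝ) (n : ℕ) (x : ℝ) : ℝ :=
  (1 / n.factorial) * ∑ j ∈ Finset.range (n + 1),
    (-a) ^ (n - j) * (n.choose j : ℝ) * gbinom x j * j.factorial

/-!
The generating function of `charlier a n x` in `n` is `(1 + t) ^ x * exp (-a * t)`, whose inverse
is the one with parameters `-a` and `-x`. Moving from `x` to `x + i` multiplies it by `(1 + t) ^ i`,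
and unitriangular row operations turn `(1 + t) ^ i` into `t ^ i`. Each Casorati determinant is
therefore a minor of the upper triangular Toeplitz matrix of its generating function. These two
Toeplitz matrices are inverse to each other and the two minors are complementary, so Jacobi's
identity relates them; the sign is that of the permutation exchanging two adjacent blocks of sizes
`m` and `n`.
-/

open Finset Matrix

theorem coe_finRotate_pow_apply {N : ℕ} (k : ℕ) (i : Fin N) :
    ((finRotate N ^ k) i : ℕ) = (i + k) % N := by
  have : NeZero N := i.neZero
  induction k with
  | zero => simp [Nat.mod_eq_of_lt i.isLt]
  | succ k ih =>
    rw [pow_succ', Equiv.Perm.mul_apply, finRotate_apply, Fin.val_add, ih, Fin.val_one',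
      ← Nat.add_mod, add_assoc]

theorem finRotate_add_pow (m n : ℕ) :
    finRotate (m + n) ^ n = finAddFlip.trans (finCongr (n.add_comm m)) := by
  ext i
  rw [coe_finRotate_pow_apply]
  refine Fin.addCases (fun j => ?_) (fun j => ?_) i
  · simp [add_comm (j : ℕ), Nat.mod_eq_of_lt (show n + (j : ℕ) < m + n by omega)]
  · simp [add_right_comm m, Nat.mod_eq_of_lt (show (j : ℕ) < m + n by omega), add_comm]

theorem sign_finAddFlip (m n : ℕ) :
    Equiv.Perm.sign (finAddFlip.trans (finCongr (n.add_comm m)) : Equiv.Perm (Fin (m + n))) =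
      (-1) ^ (n * m) := by
  rw [← finRotate_add_pow, map_pow, sign_finRotate, ← pow_mul]
  cases n with
  | zero => simp
  | succ k =>
    have exponent : (m + (k + 1) - 1) * (k + 1) = (k + 1) * m + k * (k + 1) := by
      rw [← add_assoc, Nat.add_sub_cancel]; ring
    rw [exponent, pow_add, (Nat.even_mul_succ_self k).neg_one_pow, mul_one]

section Determinants

variable {R : Type*} [CommRing R]

theorem det_toBlocks₂₂_of_mul_eq_one {m n : Type*} [Fintype m] [Fintype n] [DecidableEq m]
    [DecidableEq n] {M N : Matrix (m ⊕ n) (m ⊕ n) R} (h : M * N = 1) :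
    M.toBlocks₂₂.det = M.det * N.toBlocks₁₁.det := by
  have blocks : fromBlocks (M.toBlocks₁₁ * N.toBlocks₁₁ + M.toBlocks₁₂ * N.toBlocks₂₁)
      (M.toBlocks₁₁ * N.toBlocks₁₂ + M.toBlocks₁₂ * N.toBlocks₂₂)
      (M.toBlocks₂₁ * N.toBlocks₁₁ + M.toBlocks₂₂ * N.toBlocks₂₁)
      (M.toBlocks₂₁ * N.toBlocks₁₂ + M.toBlocks₂₂ * N.toBlocks₂₂) = fromBlocks 1 0 0 1 := by
    rw [← fromBlocks_multiply, fromBlocks_toBlocks, fromBlocks_toBlocks, h, fromBlocks_one]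
  obtain ⟨h₁₁, -, h₂₁, -⟩ := fromBlocks_inj.mp blocks
  have factor : M * fromBlocks N.toBlocks₁₁ 0 N.toBlocks₂₁ 1 =
      fromBlocks 1 M.toBlocks₁₂ 0 M.toBlocks₂₂ := by
    conv_lhs => rw [← fromBlocks_toBlocks M]
    simp [fromBlocks_multiply, h₁₁, h₂₁]
  simpa [det_fromBlocks_zero₁₂, det_fromBlocks_zero₂₁] using (congrArg det factor).symm

theorem det_linearMap_apply_monic {n : ℕ} (φ : Fin n → Polynomial R →ₗ[R] R)
    (p : Fin n → Polynomial R) (h_deg : ∀ i, (p i).natDegree = i) (h_monic : ∀ i, (p i).Monic) :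
    (of fun i j => φ j (p i)).det = (of fun i j : Fin n => φ j (Polynomial.X ^ (i : ℕ))).det := by
  have expand : (of fun i j => φ j (p i)) =
      (of fun k i : Fin n => (p i).coeff k)ᵀ *
        of fun i j : Fin n => φ j (Polynomial.X ^ (i : ℕ)) := by
    ext i j
    conv_lhs => rw [of_apply, (p i).as_sum_range' n (by rw [h_deg]; exact i.isLt)]
    simp only [map_sum, mul_apply, transpose_apply, of_apply,
      ← Polynomial.smul_X_eq_monomial, map_smul, smul_eq_mul]
    exact (Fin.sum_univ_eq_sum_range (fun k => (p i).coeff k * φ j (Polynomial.X ^ k)) n).symm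
  rw [expand, det_mul, det_transpose, det_matrixOfPolynomials p h_deg h_monic, one_mul]

end Determinants

section Toeplitz

open PowerSeries

section Semiring

variable {R : Type*} [Semiring R]

/-- The `n × n` Toeplitz matrix `(f_{m + j - i})` of the coefficients of a power series, with
`f_k = 0` for `k < 0`; writing the entry as a coefficient of `X ^ i * f` avoids the subtraction.
It is the top right corner of the upper triangular matrix `toeplitz f 0 (m + n)`. -/
noncomputable def toeplitz (f : R⟦X⟧) (m n : ℕ) : Matrix (Fin n) (Fin n) R :=
  of fun i j => coeff (m + j) (X ^ (i : ℕ) * f)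

theorem toeplitz_shift_zero_one (n : ℕ) : toeplitz (1 : R⟦X⟧) 0 n = 1 := by
  ext i j
  simp [toeplitz, coeff_X_pow, one_apply, Fin.ext_iff, eq_comm]

theorem toeplitz_shift_zero_mul (f g : R⟦X⟧) (n : ℕ) :
    toeplitz (f * g) 0 n = toeplitz f 0 n * toeplitz g 0 n := by
  ext i j
  simp only [toeplitz, mul_apply, of_apply, zero_add]
  rw [Fin.sum_univ_eq_sum_range (fun k => coeff k (X ^ (i : ℕ) * f) * coeff j (X ^ k * g)),
    ← mul_assoc, coeff_mul, Nat.sum_antidiagonal_eq_sum_range_succ_mk]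
  refine sum_subset_zero_on_sdiff (range_mono j.isLt) (fun k hk => ?_) fun k hk => ?_
  · have not_le : ¬ k ≤ j := by simpa [Nat.lt_succ_iff] using (mem_sdiff.mp hk).2
    rw [coeff_X_pow_mul' g, if_neg not_le, mul_zero]
  · rw [coeff_X_pow_mul' g, if_pos (mem_range_succ_iff.mp hk)]

end Semiring

variable {R : Type*} [CommRing R]

theorem det_toeplitz_shift_zero (f : R⟦X⟧) (n : ℕ) :
    (toeplitz f 0 n).det = constantCoeff f ^ n := by
  have upper : (toeplitz f 0 n).IsUpperTriangular := fun i j (hij : j < i) => by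
    simp [toeplitz, coeff_X_pow_mul', hij]
  rw [det_of_isUpperTriangular upper]
  simp [toeplitz, coeff_X_pow_mul']

theorem det_toeplitz_of_mul_eq_one {f g : R⟦X⟧} (hfg : f * g = 1) (m n : ℕ) :
    (toeplitz f m n).det =
      (-1) ^ (n * m) * constantCoeff f ^ (m + n) * (toeplitz g n m).det := by
  let e : Fin m ⊕ Fin n ≃ Fin (m + n) := finSumFinEquiv
  let σ : Equiv.Perm (Fin (m + n)) := finAddFlip.trans (finCongr (n.add_comm m))
  let M := (toeplitz f 0 (m + n)).submatrix (e.trans σ) e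
  let N := (toeplitz g 0 (m + n)).submatrix e (e.trans σ)
  have inverse : M * N = 1 := by
    rw [submatrix_mul_equiv, ← toeplitz_shift_zero_mul, hfg, toeplitz_shift_zero_one,
      submatrix_one_equiv]
  have det_M : M.det = (-1) ^ (n * m) * constantCoeff f ^ (m + n) := by
    have M_eq : M = ((toeplitz f 0 (m + n)).submatrix σ id).submatrix e e := rfl
    rw [M_eq, det_submatrix_equiv_self, det_permute, sign_finAddFlip, det_toeplitz_shift_zero]
    simp
  have corner_M : M.toBlocks₂₂ = toeplitz f m n := by
    ext i j
    simp [M, e, σ, toBlocks₂₂, toeplitz]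
  have corner_N : N.toBlocks₁₁ = toeplitz g n m := by
    ext i j
    simp [N, e, σ, toBlocks₁₁, toeplitz, add_comm n]
  rw [← corner_M, ← corner_N, ← det_M, det_toBlocks₂₂_of_mul_eq_one inverse]

theorem det_coeff_one_add_X_pow_mul (f : R⟦X⟧) (m n : ℕ) :
    (of fun i j : Fin n => coeff (m + j) ((1 + X) ^ (i : ℕ) * f)).det = (toeplitz f m n).det := by
  nontriviality R
  let φ (j : Fin n) : Polynomial R →ₗ[R] R :=
    coeff (m + j) ∘ₗ LinearMap.mulRight R f ∘ₗ
      (Polynomial.coeToPowerSeries.algHom (R := R) R).toLinearMap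
  have det_eq := det_linearMap_apply_monic φ
    (fun i => (Polynomial.X + Polynomial.C 1) ^ (i : ℕ))
    (fun i => by rw [(Polynomial.monic_X_add_C 1).natDegree_pow, Polynomial.natDegree_X_add_C,
      mul_one])
    (fun i => (Polynomial.monic_X_add_C 1).pow i)
  simpa [φ, toeplitz, add_comm (X : R⟦X⟧)] using det_eq

end Toeplitz

section Charlier

open PowerSeries

theorem gbinom_eq_choose (x : ℝ) (j : ℕ) : gbinom x j = Ring.choose x j := by
  rw [Ring.choose_eq_smul, gbinom, ← descPochhammer_eval_eq_prod_range,
    ← Polynomial.aeval_eq_smeval, ← descPochhammer_map (algebraMap ℤ ℝ),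
    Polynomial.eval_map_algebraMap, smul_eq_mul, div_eq_inv_mul]

/-- The generating function `(1 + t) ^ x * exp (-a * t)` of the Charlier polynomials, as a formal
power series in `t`. -/
noncomputable def charlierSeries (a x : ℝ) : ℝ⟦X⟧ :=
  PowerSeries.binomialSeries ℝ x * rescale (-a) (exp ℝ)

theorem coeff_charlierSeries (a x : ℝ) (n : ℕ) :
    coeff n (charlierSeries a x) = charlier a n x := by
  rw [charlierSeries, coeff_mul, Nat.sum_antidiagonal_eq_sum_range_succ_mk, charlier, mul_sum]
  refine sum_congr rfl fun j hj => ?_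
  rw [binomialSeries_coeff, coeff_rescale, coeff_exp, gbinom_eq_choose,
    Nat.cast_choose ℝ (mem_range_succ_iff.mp hj)]
  simp only [smul_eq_mul, map_div₀, map_one, map_natCast]
  field_simp

theorem constantCoeff_charlierSeries (a x : ℝ) : constantCoeff (charlierSeries a x) = 1 := by
  rw [← coeff_zero_eq_constantCoeff_apply, coeff_charlierSeries]
  simp [charlier, gbinom]

theorem charlierSeries_mul_neg (a x : ℝ) : charlierSeries a x * charlierSeries (-a) (-x) = 1 := by
  rw [charlierSeries, charlierSeries, mul_mul_mul_comm, ← binomialSeries_add,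
    exp_mul_exp_eq_exp_add, add_neg_cancel, add_neg_cancel, binomialSeries_zero]
  simp

theorem charlierSeries_add_natCast (a x : ℝ) (i : ℕ) :
    charlierSeries a (x + i) = (1 + X) ^ i * charlierSeries a x := by
  rw [charlierSeries, charlierSeries, binomialSeries_add, binomialSeries_nat,
    mul_comm _ ((1 + X) ^ i), mul_assoc]

theorem det_charlier_casorati (a x : ℝ) (m n : ℕ) :
    (of fun i j : Fin n => charlier a (m + (j : ℕ)) (x + (i : ℕ))).det =
      (toeplitz (charlierSeries a x) m n).det := by
  simp only [← coeff_charlierSeries, charlierSeries_add_natCast, det_coeff_one_add_X_pow_mul]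

end Charlier

/-- the symmetry of Casorati determinants of Charlier
polynomials. -/
theorem charlier_casorati_symmetry (a : ℝ) (ha : a ≠ 0) (n m : ℕ) (x : ℝ) :
    Matrix.det (Matrix.of fun i j : Fin n =>
      charlier a (m + (j : ℕ)) (x + (i : ℕ)))
    = (-1 : ℝ) ^ (n * m) *
      Matrix.det (Matrix.of fun i j : Fin m =>
        charlier (-a) (n + (j : ℕ)) (-x + (i : ℕ))) := by
  rw [det_charlier_casorati, det_charlier_casorati,
    det_toeplitz_of_mul_eq_one (charlierSeries_mul_neg a x), constantCoeff_charlierSeries,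
    one_pow, mul_one]
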